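/- Let q be locally absolutely continuous on ℝ₊ with |q(x)| > C₁ > 0 for all x ≥ 0 and |q′(x)/q(x)^{3/2}| < C₂ for a.e. x ≥ 0. Then for any solution y of −y″ + q y = 0 on ℝ₊, the condition ∫₀^∞ |y(x)|² dx < ∞ implies ∫₀^∞ |y′(x)|²/|q(x)| dx < ∞. -/

import Mathlib

/-!
Write `F = Re (y' * conj y) / |q|`. Since `y'' = q y`, almost everywhere

  `F' = |y'|² / |q| + Re q * |y|² / |q| - Re (y' * conj y) * |q|' / |q|²`,

and `||q|'| ≤ |q'| ≤ C₂ |q|^(3/2)`, so Young's inequality gives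
`F' ≥ |y'|² / (2|q|) - K |y|²` with `K = 1 + C₂² / 2` (`bracket_lower_bound`). As `F` is absolutely
continuous, `H(b) = ∫₀ᵇ |y'|² / |q|` satisfies `H(b) / 2 ≤ F(b) - F(0) + K ∫₀^∞ |y|²`
(`energy_le`). If `H` exceeded a suitable constant at one point `b`, then, `H` being monotone,
`F > 0` on all of `[b, ∞)`. But `F > 0` means that `|y|²` has positive derivative and `y b ≠ 0`, so
`|y|²` would be bounded below by a positive constant on `[b, ∞)`, contradicting `y ∈ L₂`. Hence `H`
is bounded.
-/

open MeasureTheory Filter Topology Complex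

noncomputable section

/-- The open sector `Π_κ = {z ≠ 0 : arg z ∈ (-π+κ, π-κ)}`. -/
def PiSector (κ : ℝ) : Set ℂ :=
  {z : ℂ | z ≠ 0 ∧ -Real.pi + κ < z.arg ∧ z.arg < Real.pi - κ}

/-- `f` is locally absolutely continuous on `[a,∞)` with a.e. derivative `f'`:
`f'` is locally integrable there and `f` is recovered from `f'` by integration. -/
def LocACOn (f f' : ℝ → ℂ) (a : ℝ) : Prop :=
  (∀ b, a ≤ b → IntervalIntegrable f' volume a b) ∧
  ∀ x, a ≤ x → f x = f a + ∫ t in a..x, f' t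

/-- `y` (with first derivative `y'`) is a solution of `-y'' + q y = f` on `ℝ₊`:
`y, y'` are locally absolutely continuous on `[0,∞)` and the a.e. derivative of
`y'` equals `q y - f`. -/
def IsSol (q f y y' : ℝ → ℂ) : Prop :=
  LocACOn y y' 0 ∧ LocACOn y' (fun x => q x * y x - f x) 0

/-- `y` is nontrivial on `ℝ₊`. -/
def NontrivialSol (y : ℝ → ℂ) : Prop := ∃ x, 0 ≤ x ∧ y x ≠ 0

/-- membership in the weighted space `L₂(ℝ₊, w)`. -/
def MemL2 (w : ℝ → ℝ) (f : ℝ → ℂ) : Prop :=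
  AEStronglyMeasurable f (volume.restrict (Set.Ici (0:ℝ))) ∧
  IntegrableOn (fun x => w x * ‖f x‖ ^ 2) (Set.Ici (0:ℝ)) volume

/-- the branch `p = √q` with positive real part (principal branch). -/
def sqrtQ (q : ℝ → ℂ) (x : ℝ) : ℂ := (q x) ^ ((1 : ℂ) / 2)

/-- the a.e. derivative of `sqrtQ q`, where `q'` is the a.e. derivative of `q`. -/
def sqrtQD (q q' : ℝ → ℂ) (x : ℝ) : ℂ := q' x / (2 * sqrtQ q x)

/-- the weight `ρ = Re p - (1/2)|p'/p|`. -/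
def rho (q q' : ℝ → ℂ) (x : ℝ) : ℝ :=
  (sqrtQ q x).re - (1 / 2) * ‖sqrtQD q q' x / sqrtQ q x‖

/-- Condition A for `q` on `[x₀,∞)` with constant `C`, where `q'` is the
a.e. derivative of `q`: `q ∈ L¹loc(ℝ₊)`, `q` is locally absolutely continuous
on `[x₀,∞)`, `q` takes values in a sector `Π_κ` on `[x₀,∞)`, the branch
`p = √q` has positive real part there, and
`Re p ≥ C + (1/2)|p'/p|` a.e. on `[x₀,∞)`. -/
def CondA (q q' : ℝ → ℂ) (x₀ C : ℝ) : Prop :=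
  LocallyIntegrableOn q (Set.Ici (0:ℝ)) volume ∧
  LocACOn q q' x₀ ∧
  (∃ κ, 0 ≤ κ ∧ ∀ x, x₀ ≤ x → q x ∈ PiSector κ) ∧
  (∀ x, x₀ ≤ x → 0 < (sqrtQ q x).re) ∧
  0 < C ∧
  ∀ᵐ x : ℝ, x₀ ≤ x → C + (1 / 2) * ‖sqrtQD q q' x / sqrtQ q x‖ ≤ (sqrtQ q x).re

/-- The set `𝒩` of spectral parameters `lam` such that `q - lam` satisfies
condition A for `x ≥ x₁(lam)` for some `x₁(lam) ≥ 0` (note `(q - lam)' = q'`). -/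
def NSet (q q' : ℝ → ℂ) : Set ℂ :=
  {lam : ℂ | ∃ x₁ C, 0 ≤ x₁ ∧ CondA (fun x => q x - lam) q' x₁ C}

/-- Absolute continuity passes to any function whose oscillation is dominated, up to a constant, by
that of an absolutely continuous one. -/
lemma ac_of_dist_le {X Y : Type*} [PseudoMetricSpace X] [PseudoMetricSpace Y]
    {f : ℝ → X} {g : ℝ → Y} {a b K : ℝ}
    (hf : AbsolutelyContinuousOnInterval f a b)
    (h : ∀ x ∈ Set.uIcc a b, ∀ z ∈ Set.uIcc a b, dist (g x) (g z) ≤ K * dist (f x) (f z)) :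
    AbsolutelyContinuousOnInterval g a b := by
  rw [absolutelyContinuousOnInterval_iff] at hf ⊢
  intro ε hε
  obtain ⟨δ, hδ, H⟩ := hf (ε / (|K| + 1)) (by positivity)
  refine ⟨δ, hδ, fun E hE hs => ?_⟩
  have h1 := H E hE hs
  rw [lt_div_iff₀ (by positivity)] at h1
  refine lt_of_le_of_lt ?_ h1
  rw [Finset.sum_mul]
  refine Finset.sum_le_sum fun i hi => ?_
  have h2 := h _ (hE.1 i hi).1 _ (hE.1 i hi).2
  have h3 : (0 : ℝ) ≤ dist (f (E.2 i).1) (f (E.2 i).2) := dist_nonneg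
  nlinarith [le_abs_self K]

lemma LocACOn.sub_eq {f f' : ℝ → ℂ} (h : LocACOn f f' 0) {x z : ℝ} (hx : 0 ≤ x) (hz : 0 ≤ z) :
    f x - f z = ∫ t in z..x, f' t := by
  rw [h.2 x hx, h.2 z hz, ← intervalIntegral.integral_interval_sub_left (h.1 x hx) (h.1 z hz)]
  ring

lemma LocACOn.ac {f f' : ℝ → ℂ} (h : LocACOn f f' 0) {b : ℝ} (hb : 0 ≤ b) :
    AbsolutelyContinuousOnInterval f 0 b := by
  have hint := (h.1 b hb).norm
  refine ac_of_dist_le (K := 1)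
    (hint.absolutelyContinuousOnInterval_intervalIntegral (c := 0) (by simp)) ?_
  intro x hx z hz
  rw [Set.uIcc_of_le hb] at hx hz
  rw [dist_eq_norm, h.sub_eq hx.1 hz.1, one_mul, Real.dist_eq,
    intervalIntegral.integral_interval_sub_left (h.1 x hx.1).norm (h.1 z hz.1).norm]
  exact intervalIntegral.norm_integral_le_abs_integral_norm

lemma LocACOn.continuousOn {f f' : ℝ → ℂ} (h : LocACOn f f' 0) {b : ℝ} (hb : 0 ≤ b) :
    ContinuousOn f (Set.Icc 0 b) := by
  simpa [Set.uIcc_of_le hb] using (h.ac hb).continuousOn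

lemma LocACOn.ae_hasDerivAt {f f' : ℝ → ℂ} (h : LocACOn f f' 0) {b : ℝ} (hb : 0 ≤ b) :
    ∀ᵐ x : ℝ, x ∈ Set.Ioo 0 b → HasDerivAt f (f' x) x := by
  filter_upwards [(h.1 b hb).ae_hasDerivAt_integral] with x hx hxb
  have h1 := hx (by rw [Set.uIcc_of_le hb]; exact Set.Ioo_subset_Icc_self hxb) 0 (by simp)
  refine (h1.const_add (f 0)).congr_of_eventuallyEq ?_
  filter_upwards [Ioi_mem_nhds hxb.1] with z hz using h.2 z (le_of_lt hz)

/-- The derivative of a norm is at most the norm of the derivative. -/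
lemma exists_hasDerivAt_norm {f : ℝ → ℂ} {d : ℂ} {x : ℝ} (hf : HasDerivAt f d x) (h0 : f x ≠ 0) :
    ∃ n : ℝ, HasDerivAt (fun t => ‖f t‖) n x ∧ |n| ≤ ‖d‖ := by
  have hd : DifferentiableAt ℝ (fun t => ‖f t‖) x := hf.differentiableAt.norm ℝ h0
  refine ⟨_, hd.hasDerivAt, ?_⟩
  set n := deriv (fun t => ‖f t‖) x
  have h1 : HasDerivAt (fun t => ‖f t‖ ^ 2) (2 * ‖f x‖ * n) x := by
    simpa using hd.hasDerivAt.fun_pow 2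
  have h2 := h1.unique hf.norm_sq
  have h3 : ‖f x‖ * n = inner ℝ (f x) d := by linarith
  have h4 : 0 < ‖f x‖ := norm_pos_iff.2 h0
  have h5 := abs_real_inner_le_norm (f x) d
  rw [← h3, abs_mul, abs_norm] at h5
  exact le_of_mul_le_mul_left h5 h4

/-- The real number `Re (y' * conj y)`, written in coordinates; it is half the derivative
of `|y|²`. -/
def bracket (y y' : ℝ → ℂ) (x : ℝ) : ℝ := (y' x).re * (y x).re + (y' x).im * (y x).im

lemma abs_bracket_le (y y' : ℝ → ℂ) (x : ℝ) : |bracket y y' x| ≤ ‖y' x‖ * ‖y x‖ := by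
  have h := abs_real_inner_le_norm (y' x) (y x)
  rw [Complex.inner] at h
  simpa [bracket, mul_comm] using h

lemma bracket_div_ac {q q' y y' : ℝ → ℂ} {C₁ : ℝ} (hC₁ : 0 < C₁) (hAC : LocACOn q q' 0)
    (hq : ∀ x, 0 ≤ x → C₁ < ‖q x‖) (hy : IsSol q 0 y y') {b : ℝ} (hb : 0 ≤ b) :
    AbsolutelyContinuousOnInterval (fun x => bracket y y' x * ‖q x‖⁻¹) 0 b := by
  have hre : ∀ {f : ℝ → ℂ}, AbsolutelyContinuousOnInterval f 0 b →
      AbsolutelyContinuousOnInterval (fun x => (f x).re) 0 b := fun hf =>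
    ac_of_dist_le (K := 1) hf fun x _ z _ => by
      rw [Real.dist_eq, dist_eq_norm, one_mul, ← Complex.sub_re]; exact Complex.abs_re_le_norm _
  have him : ∀ {f : ℝ → ℂ}, AbsolutelyContinuousOnInterval f 0 b →
      AbsolutelyContinuousOnInterval (fun x => (f x).im) 0 b := fun hf =>
    ac_of_dist_le (K := 1) hf fun x _ z _ => by
      rw [Real.dist_eq, dist_eq_norm, one_mul, ← Complex.sub_im]; exact Complex.abs_im_le_norm _
  have hn : AbsolutelyContinuousOnInterval (fun x => ‖q x‖⁻¹) 0 b := by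
    refine ac_of_dist_le (K := (C₁ * C₁)⁻¹) (hAC.ac hb) fun x hx z hz => ?_
    rw [Set.uIcc_of_le hb] at hx hz
    have h1 := hq x hx.1
    have h2 := hq z hz.1
    have p1 : 0 < ‖q x‖ := hC₁.trans h1
    have p2 : 0 < ‖q z‖ := hC₁.trans h2
    rw [Real.dist_eq, inv_sub_inv p1.ne' p2.ne', abs_div, abs_of_pos (mul_pos p1 p2),
      div_eq_inv_mul, dist_eq_norm, abs_sub_comm]
    gcongr
    exact abs_norm_sub_norm_le _ _
  have ay := hy.1.ac hb
  have ay' := hy.2.ac hb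
  exact (((hre ay').fun_mul (hre ay)).fun_add ((him ay').fun_mul (him ay))).fun_mul hn

/-- The pointwise differential inequality for `Re (y' * conj y) / |q|`. -/
lemma bracket_lower_bound {q q' y y' : ℝ → ℂ} {C₂ x : ℝ} (h0 : q x ≠ 0)
    (hq : HasDerivAt q (q' x) x) (hy : HasDerivAt y (y' x) x)
    (hy' : HasDerivAt y' (q x * y x) x) (hb : ‖q' x / (q x) ^ ((3 : ℂ) / 2)‖ < C₂) :
    (1 / 2) * (‖y' x‖ ^ 2 / ‖q x‖) - (1 + C₂ ^ 2 / 2) * ‖y x‖ ^ 2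
      ≤ deriv (fun x => bracket y y' x * ‖q x‖⁻¹) x := by
  obtain ⟨n, hn, hnle⟩ := exists_hasDerivAt_norm hq h0
  have hre : ∀ {f : ℝ → ℂ} {d : ℂ}, HasDerivAt f d x → HasDerivAt (fun t => (f t).re) d.re x :=
    fun hf => Complex.reCLM.hasFDerivAt.comp_hasDerivAt x hf
  have him : ∀ {f : ℝ → ℂ} {d : ℂ}, HasDerivAt f d x → HasDerivAt (fun t => (f t).im) d.im x :=
    fun hf => Complex.imCLM.hasFDerivAt.comp_hasDerivAt x hf
  have hN : 0 < ‖q x‖ := norm_pos_iff.2 h0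
  have hD := (((hre hy').fun_mul (hre hy)).fun_add ((him hy').fun_mul (him hy))).fun_mul
    (hn.fun_inv hN.ne')
  have hD' : deriv (fun x => bracket y y' x * ‖q x‖⁻¹) x = _ := hD.deriv
  rw [hD']
  -- the right-hand side is expressed through `s = |q|^(1/2)` and `u = |y'| / s`
  obtain ⟨s, hs, hsN⟩ : ∃ s : ℝ, 0 < s ∧ ‖q x‖ = s ^ 2 :=
    ⟨√‖q x‖, Real.sqrt_pos.2 hN, (Real.sq_sqrt hN.le).symm⟩
  have hpow : ‖(q x) ^ ((3 : ℂ) / 2)‖ = s ^ 3 := by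
    have h1 : ((3 : ℂ) / 2) = (((3 : ℝ) / 2 : ℝ) : ℂ) := by push_cast; rfl
    rw [h1, Complex.norm_cpow_real, hsN, ← Real.rpow_natCast, ← Real.rpow_mul hs.le,
      ← Real.rpow_natCast]
    norm_num
  rw [norm_div, hpow, div_lt_iff₀ (by positivity)] at hb
  have hn' : |n| ≤ C₂ * s ^ 3 := hnle.trans hb.le
  have hBle := abs_bracket_le y y' x
  have hY' : ‖y' x‖ ^ 2 = (y' x).re ^ 2 + (y' x).im ^ 2 := by
    rw [← Complex.normSq_eq_norm_sq, Complex.normSq_apply]; ring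
  have hY : ‖y x‖ ^ 2 = (y x).re ^ 2 + (y x).im ^ 2 := by
    rw [← Complex.normSq_eq_norm_sq, Complex.normSq_apply]; ring
  have hqre : -s ^ 2 ≤ (q x).re := by
    have := neg_le_of_abs_le (Complex.abs_re_le_norm (q x)); linarith
  have hcross : |bracket y y' x * n| ≤ ‖y' x‖ * ‖y x‖ * (C₂ * s ^ 3) := by
    rw [abs_mul]; gcongr
  have hcross' := (le_abs_self _).trans hcross
  rw [hsN]
  have key : (1 / 2) * (‖y' x‖ ^ 2 / s ^ 2) - (1 + C₂ ^ 2 / 2) * ‖y x‖ ^ 2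
      ≤ (‖y' x‖ ^ 2 + (q x).re * ‖y x‖ ^ 2) / s ^ 2 - bracket y y' x * n / s ^ 4 := by
    have e1 : bracket y y' x * n / s ^ 4 ≤ ‖y' x‖ / s * ‖y x‖ * C₂ := by
      rw [div_le_iff₀ (by positivity)]
      refine hcross'.trans (le_of_eq ?_)
      field_simp
    have e2 : (‖y' x‖ / s) ^ 2 - ‖y x‖ ^ 2
        ≤ (‖y' x‖ ^ 2 + (q x).re * ‖y x‖ ^ 2) / s ^ 2 := by
      rw [le_div_iff₀ (by positivity), sub_mul, div_pow, div_mul_cancel₀ _ (by positivity)]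
      nlinarith [sq_nonneg ‖y x‖]
    rw [← div_pow]
    nlinarith [sq_nonneg (‖y' x‖ / s - C₂ * ‖y x‖)]
  refine key.trans (le_of_eq ?_)
  rw [hY', hY]
  simp only [bracket, Complex.mul_re, Complex.mul_im]
  field_simp
  ring

lemma intervalIntegrable_energy {q q' y y' : ℝ → ℂ} {C₁ : ℝ} (hC₁ : 0 < C₁)
    (hAC : LocACOn q q' 0) (hq : ∀ x, 0 ≤ x → C₁ < ‖q x‖) (hy : IsSol q 0 y y') {a b : ℝ}
    (ha : 0 ≤ a) (hab : a ≤ b) :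
    IntervalIntegrable (fun x => ‖y' x‖ ^ 2 / ‖q x‖) volume a b := by
  refine ContinuousOn.intervalIntegrable_of_Icc hab ?_
  have h0 : 0 ≤ b := ha.trans hab
  refine ContinuousOn.mono ?_ (Set.Icc_subset_Icc_left ha)
  exact ((hy.2.continuousOn h0).norm.pow 2).div (hAC.continuousOn h0).norm
    fun x hx => (hC₁.trans (hq x hx.1)).ne'

/-- The integrated form of `bracket_lower_bound`. -/
lemma energy_le {q q' y y' : ℝ → ℂ} {C₁ C₂ : ℝ} (hC₁ : 0 < C₁) (hAC : LocACOn q q' 0)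
    (hq : ∀ x, 0 ≤ x → C₁ < ‖q x‖)
    (hq' : ∀ᵐ x : ℝ, 0 ≤ x → ‖q' x / (q x) ^ ((3 : ℂ) / 2)‖ < C₂) (hy : IsSol q 0 y y')
    (hyL2 : IntegrableOn (fun x => ‖y x‖ ^ 2) (Set.Ici (0:ℝ)) volume) {b : ℝ} (hb : 0 ≤ b) :
    (1 / 2) * (∫ x in (0:ℝ)..b, ‖y' x‖ ^ 2 / ‖q x‖)
        - (1 + C₂ ^ 2 / 2) * ∫ x in Set.Ici (0:ℝ), ‖y x‖ ^ 2
      ≤ bracket y y' b * ‖q b‖⁻¹ - bracket y y' 0 * ‖q 0‖⁻¹ := by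
  have hF := bracket_div_ac hC₁ hAC hq hy hb
  rw [← hF.integral_deriv_eq_sub]
  have hI := intervalIntegrable_energy hC₁ hAC hq hy le_rfl hb
  have hsub : Set.Ioc 0 b ⊆ Set.Ici (0:ℝ) := fun x hx => hx.1.le
  have hY : IntervalIntegrable (fun x => ‖y x‖ ^ 2) volume 0 b :=
    (intervalIntegrable_iff_integrableOn_Ioc_of_le hb).2 (hyL2.mono_set hsub)
  have hYle : ∫ x in (0:ℝ)..b, ‖y x‖ ^ 2 ≤ ∫ x in Set.Ici (0:ℝ), ‖y x‖ ^ 2 := by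
    rw [intervalIntegral.integral_of_le hb]
    exact setIntegral_mono_set hyL2 (ae_of_all _ fun x => by positivity) hsub.eventuallyLE
  have hmono : ∫ x in (0:ℝ)..b,
        ((1 / 2) * (‖y' x‖ ^ 2 / ‖q x‖) - (1 + C₂ ^ 2 / 2) * ‖y x‖ ^ 2)
      ≤ ∫ x in (0:ℝ)..b, deriv (fun x => bracket y y' x * ‖q x‖⁻¹) x := by
    refine intervalIntegral.integral_mono_ae_restrict hb ((hI.const_mul _).sub (hY.const_mul _))
      hF.intervalIntegrable_deriv ?_
    rw [EventuallyLE, ae_restrict_iff' measurableSet_Icc]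
    filter_upwards [hq', hAC.ae_hasDerivAt hb, hy.1.ae_hasDerivAt hb, hy.2.ae_hasDerivAt hb,
      Measure.ae_ne volume 0, Measure.ae_ne volume b] with x h1 h2 h3 h4 h5 h6 hx
    have hx' : x ∈ Set.Ioo 0 b := ⟨lt_of_le_of_ne hx.1 (Ne.symm h5), lt_of_le_of_ne hx.2 h6⟩
    exact bracket_lower_bound (norm_pos_iff.1 (hC₁.trans (hq x hx.1))) (h2 hx') (h3 hx')
      (by simpa using h4 hx') (h1 hx.1)
  rw [intervalIntegral.integral_sub (hI.const_mul _) (hY.const_mul _),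
    intervalIntegral.integral_const_mul, intervalIntegral.integral_const_mul] at hmono
  refine le_trans ?_ hmono
  gcongr

/-- If `Re (y' * conj y)` stays positive from some point on, then `|y|²` is eventually increasing
and bounded below by a positive constant, hence not integrable. -/
lemma exists_bracket_nonpos {g y y' : ℝ → ℂ} (hy : LocACOn y y' 0) (hy' : LocACOn y' g 0)
    (hyL2 : IntegrableOn (fun x => ‖y x‖ ^ 2) (Set.Ici (0:ℝ)) volume) {b : ℝ} (hb : 0 ≤ b) :
    ∃ x, b ≤ x ∧ bracket y y' x ≤ 0 := by
  by_contra! hpos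
  have hder : ∀ x, b < x → HasDerivAt (fun t => ‖y t‖ ^ 2) (2 * bracket y y' x) x := by
    intro x hx
    have hx0 : 0 < x := hb.trans_lt hx
    have hc := hy'.continuousOn (b := x + 1) (by linarith)
    have hm : Set.Icc 0 (x + 1) ∈ 𝓝 x := Icc_mem_nhds hx0 (by linarith)
    have h1 : HasDerivAt (fun z => ∫ t in (0:ℝ)..z, y' t) (y' x) x :=
      intervalIntegral.integral_hasDerivAt_right (hy.1 x hx0.le)
        (hc.stronglyMeasurableAtFilter_nhdsWithin measurableSet_Icc x |>.filter_mono
          (by rw [nhdsWithin_eq_nhds.2 hm]))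
        (hc.continuousAt hm)
    have h2 : HasDerivAt y (y' x) x := by
      refine (h1.const_add (y 0)).congr_of_eventuallyEq ?_
      filter_upwards [Ioi_mem_nhds hx0] with z hz using hy.2 z (le_of_lt hz)
    have h3 := h2.norm_sq
    rw [Complex.inner] at h3
    convert h3 using 1
    simp [bracket]
  have hmono : ∀ x, b ≤ x → ‖y b‖ ^ 2 ≤ ‖y x‖ ^ 2 := by
    intro x hx
    have hM : MonotoneOn (fun t => ‖y t‖ ^ 2) (Set.Icc b x) := by
      refine monotoneOn_of_deriv_nonneg (convex_Icc _ _) ?_ ?_ ?_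
      · exact ((hy.continuousOn (hb.trans hx)).mono (Set.Icc_subset_Icc_left hb)).norm.pow 2
      · intro z hz
        rw [interior_Icc] at hz
        exact (hder z hz.1).differentiableAt.differentiableWithinAt
      · intro z hz
        rw [interior_Icc] at hz
        rw [(hder z hz.1).deriv]
        have := hpos z hz.1.le
        positivity
    exact hM ⟨le_rfl, hx⟩ ⟨hx, le_rfl⟩ hx
  have hyb : y b ≠ 0 := by
    intro h
    have := hpos b le_rfl
    simp [bracket, h] at this
  have hc : IntegrableOn (fun _ : ℝ => ‖y b‖ ^ 2) (Set.Ici b) volume := by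
    refine Integrable.mono' (hyL2.mono_set (Set.Ici_subset_Ici.2 hb)) (by fun_prop) ?_
    rw [ae_restrict_iff' measurableSet_Ici]
    refine ae_of_all _ fun x hx => ?_
    simpa using hmono x hx
  rw [integrableOn_const_iff] at hc
  simp [hyb] at hc

/-- If `q` is locally absolutely continuous on `ℝ₊`, `|q| > C₁ > 0` and
`|q'/q^{3/2}| < C₂` a.e. on `ℝ₊`, then for any solution `y` of `-y'' + q y = 0`
with `y ∈ L₂(ℝ₊)` one has `y'/|q|^{1/2} ∈ L₂(ℝ₊)`. -/
theorem statement3 (q q' : ℝ → ℂ) (C₁ C₂ : ℝ) (hC₁ : 0 < C₁)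
    (hAC : LocACOn q q' 0)
    (hq : ∀ x, 0 ≤ x → C₁ < ‖q x‖)
    (hq' : ∀ᵐ x : ℝ, 0 ≤ x → ‖q' x / (q x) ^ ((3 : ℂ) / 2)‖ < C₂)
    (y y' : ℝ → ℂ) (hy : IsSol q 0 y y')
    (hyL2 : IntegrableOn (fun x => ‖y x‖ ^ 2) (Set.Ici (0:ℝ)) volume) :
    IntegrableOn (fun x => ‖y' x‖ ^ 2 / ‖q x‖) (Set.Ici (0:ℝ)) volume := by
  have hE := fun {b : ℝ} (hb : 0 ≤ b) => energy_le hC₁ hAC hq hq' hy hyL2 hb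
  rw [integrableOn_Ici_iff_integrableOn_Ioi]
  refine integrableOn_Ioi_of_intervalIntegral_norm_bounded (b := id) (l := atTop)
    (2 * ((1 + C₂ ^ 2 / 2) * (∫ x in Set.Ici (0:ℝ), ‖y x‖ ^ 2) - bracket y y' 0 * ‖q 0‖⁻¹)) 0
    ?_ tendsto_id ?_
  · intro b
    rcases le_total 0 b with hb | hb
    · exact (intervalIntegrable_iff_integrableOn_Ioc_of_le hb).1
        (intervalIntegrable_energy hC₁ hAC hq hy le_rfl hb)
    · simp [Set.Ioc_eq_empty_of_le hb]
  · filter_upwards [eventually_ge_atTop 0] with b hb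
    have hnorm : ∀ x, ‖‖y' x‖ ^ 2 / ‖q x‖‖ = ‖y' x‖ ^ 2 / ‖q x‖ := fun x =>
      Real.norm_of_nonneg (by positivity)
    simp only [hnorm, id]
    by_contra! hlt
    obtain ⟨x, hbx, hx⟩ := exists_bracket_nonpos hy.1 hy.2 hyL2 hb
    have h1 := hE (hb.trans hbx)
    have h2 : bracket y y' x * ‖q x‖⁻¹ ≤ 0 :=
      mul_nonpos_of_nonpos_of_nonneg hx (by positivity)
    have h3 : 0 ≤ ∫ x in b..x, ‖y' x‖ ^ 2 / ‖q x‖ :=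
      intervalIntegral.integral_nonneg hbx fun t _ => by positivity
    have h4 := intervalIntegral.integral_add_adjacent_intervals
      (intervalIntegrable_energy hC₁ hAC hq hy le_rfl hb)
      (intervalIntegrable_energy hC₁ hAC hq hy hb hbx)
    linarith
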